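/- Let n ≥ 2, let B ⊂ ℝⁿ be a closed ball with interior B° and boundary sphere ∂B. Let a : B × ℝ → ℝ be C² with ∂_μ a(x,μ) ≥ 0 for all (x,μ) ∈ B × ℝ. Let u, w : B → ℝ be continuous on B and twice continuously differentiable on B°, with −Δu(x) + a(x,u(x)) = 0 and −Δw(x) + a(x,w(x)) = 0 for all x ∈ B°, and u(x) ≤ w(x) for all x ∈ ∂B. Then u(x) ≤ w(x) for all x ∈ B; in particular, if |u| ≤ λ on ∂B and u₋, u₊ are the solutions with constant boundary values −λ and +λ respectively, then u₋ ≤ u ≤ u₊ on B. -/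

import Mathlib

/-!
The function `u - w` is subharmonic wherever it is positive: there the equations and the
monotonicity of `a` give `Δ (u - w) = a (·, u) - a (·, w) ≥ 0`. Such a function cannot be positive
at an interior point while being nonpositive on the boundary: for small `ε > 0` the maximum of
`u - w + ε ‖·‖²` is attained at an interior point where `u - w` is still positive, and there
`0 ≥ Δ (u - w + ε ‖·‖²) ≥ 2 ε n`.
-/

open Set Metric

/-- The Euclidean Laplacian `Δu(x) = ∑ i, ∂²u/∂xᵢ²(x)`. -/
noncomputable def lap {n : ℕ} (u : EuclideanSpace ℝ (Fin n) → ℝ)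
    (x : EuclideanSpace ℝ (Fin n)) : ℝ :=
  ∑ i : Fin n,
    fderiv ℝ (fun y => fderiv ℝ u y (EuclideanSpace.single i 1)) x (EuclideanSpace.single i 1)

section Laplacian

open Filter Bornology Laplacian InnerProductSpace
open scoped Topology

lemma deriv_deriv_nonpos_of_isLocalMax {f : ℝ → ℝ} {x : ℝ} (hmax : IsLocalMax f x)
    (hf : ContinuousAt f x) : deriv (deriv f) x ≤ 0 := by
  by_contra! hpos
  have hmin : IsLocalMin f x := isLocalMin_of_deriv_deriv_pos hpos hmax.deriv_eq_zero hf
  have hconst : f =ᶠ[𝓝 x] fun _ => f x := by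
    filter_upwards [hmax, hmin] with y hle hge using le_antisymm hle hge
  have hzero : deriv (deriv f) x = 0 := by
    rw [hconst.deriv.deriv_eq]
    simp only [deriv_const', deriv_const]
  exact hpos.ne' hzero

section NormedSpace

variable {E F : Type*} [NormedAddCommGroup E] [NormedSpace ℝ E]
  [NormedAddCommGroup F] [NormedSpace ℝ F]

lemma fderiv_fderiv_apply_const {f : E → F} {x : E} (hf : ContDiffAt ℝ 2 f x) (v w : E) :
    fderiv ℝ (fun y => fderiv ℝ f y v) x w = iteratedFDeriv ℝ 2 f x ![w, v] := by
  have hf' : DifferentiableAt ℝ (fderiv ℝ f) x :=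
    (hf.fderiv_right (m := 1) le_rfl).differentiableAt one_ne_zero
  rw [fderiv_clm_apply hf' (differentiableAt_const v), iteratedFDeriv_two_apply]
  simp

lemma deriv_deriv_comp_add_smul {f : E → F} {x : E} (hf : ContDiffAt ℝ 2 f x) (v : E) :
    deriv (deriv fun t : ℝ => f (x + t • v)) 0 = iteratedFDeriv ℝ 2 f x ![v, v] := by
  have hline (t : ℝ) : HasDerivAt (fun t : ℝ => x + t • v) v t := by
    simpa using ((hasDerivAt_id t).smul_const v).const_add x
  have hline_zero : Tendsto (fun t : ℝ => x + t • v) (𝓝 0) (𝓝 x) := by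
    simpa using (hline 0).continuousAt.tendsto
  have hdiff : ∀ᶠ y in 𝓝 x, DifferentiableAt ℝ f y :=
    (hf.eventually (by simp)).mono fun y hy => hy.differentiableAt two_ne_zero
  have hderiv : (deriv fun t : ℝ => f (x + t • v)) =ᶠ[𝓝 0] fun t => fderiv ℝ f (x + t • v) v := by
    filter_upwards [hline_zero.eventually hdiff] with t ht
    exact (ht.hasFDerivAt.comp_hasDerivAt t (hline t)).deriv
  have hdiff' : DifferentiableAt ℝ (fun y => fderiv ℝ f y v) x :=
    ((hf.fderiv_right (m := 1) le_rfl).differentiableAt one_ne_zero).clm_apply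
      (differentiableAt_const v)
  rw [hderiv.deriv_eq, ← fderiv_fderiv_apply_const hf]
  exact (hdiff'.hasFDerivAt.comp_hasDerivAt_of_eq 0 (hline 0) (by simp)).deriv

lemma iteratedFDeriv_two_nonpos_of_isLocalMax {f : E → ℝ} {x : E} (hf : ContDiffAt ℝ 2 f x)
    (hmax : IsLocalMax f x) (v : E) : iteratedFDeriv ℝ 2 f x ![v, v] ≤ 0 := by
  have hline : ContinuousAt (fun t : ℝ => x + t • v) 0 := by fun_prop
  have hx : x + (0 : ℝ) • v = x := by simp
  rw [← deriv_deriv_comp_add_smul hf]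
  apply deriv_deriv_nonpos_of_isLocalMax
  · exact IsMaxFilter.comp_tendsto (by rwa [hx]) (by simpa only [hx] using hline.tendsto)
  · exact hf.continuousAt.comp_of_eq hline hx

end NormedSpace

variable {E : Type*} [NormedAddCommGroup E] [InnerProductSpace ℝ E] [FiniteDimensional ℝ E]

lemma laplacian_nonpos_of_isLocalMax {f : E → ℝ} {x : E} (hf : ContDiffAt ℝ 2 f x)
    (hmax : IsLocalMax f x) : Δ f x ≤ 0 := by
  rw [laplacian_eq_iteratedFDeriv_stdOrthonormalBasis]
  exact Finset.sum_nonpos fun i _ => iteratedFDeriv_two_nonpos_of_isLocalMax hf hmax _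

lemma laplacian_norm_sq (x : E) :
    Δ (fun y : E => ‖y‖ ^ 2) x = 2 * Module.finrank ℝ E := by
  have hfst (v : E) :
      (fun y => fderiv ℝ (fun y : E => ‖y‖ ^ 2) y v) = fun y => 2 * inner ℝ v y := by
    ext y
    simp [fderiv_norm_sq_apply, real_inner_comm]
  have hsnd (v : E) : iteratedFDeriv ℝ 2 (fun y : E => ‖y‖ ^ 2) x ![v, v] = 2 * ‖v‖ ^ 2 := by
    rw [← fderiv_fderiv_apply_const (contDiff_norm_sq ℝ).contDiffAt, hfst,
      ← real_inner_self_eq_norm_sq]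
    exact DFunLike.congr_fun ((innerSL ℝ v).hasFDerivAt.const_mul 2).fderiv v
  rw [laplacian_eq_iteratedFDeriv_stdOrthonormalBasis]
  simp [hsnd, mul_comm]

variable [Nontrivial E] {Ω : Set E}

lemma nonpos_of_laplacian_nonneg_of_pos (hΩ : IsOpen Ω) (hbdd : IsBounded Ω) {v : E → ℝ}
    (hvc : ContinuousOn v (closure Ω)) (hv : ContDiffOn ℝ 2 v Ω)
    (hΔ : ∀ x ∈ Ω, 0 < v x → 0 ≤ Δ v x) (hbdry : ∀ x ∈ frontier Ω, v x ≤ 0) :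
    ∀ x ∈ closure Ω, v x ≤ 0 := by
  intro x₁ hx₁
  by_contra! hpos
  obtain ⟨R, hR⟩ := hbdd.closure.exists_norm_le
  obtain ⟨ε, hε, hεR⟩ : ∃ ε : ℝ, 0 < ε ∧ R ^ 2 * ε < v x₁ := exists_pos_mul_lt hpos _
  let q : E → ℝ := fun x => ‖x‖ ^ 2
  have hq : ContDiff ℝ 2 q := contDiff_norm_sq ℝ
  have hgc : ContinuousOn (v + ε • q) (closure Ω) :=
    hvc.add (hq.continuous.const_smul ε).continuousOn
  obtain ⟨z, hz, hzmax⟩ := hbdd.isCompact_closure.exists_isMaxOn ⟨x₁, hx₁⟩ hgc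
  have hvz : 0 < v z := by
    have hle : v x₁ + ε * ‖x₁‖ ^ 2 ≤ v z + ε * ‖z‖ ^ 2 := hzmax hx₁
    have hzR : ε * ‖z‖ ^ 2 ≤ ε * R ^ 2 := by gcongr; exact hR z hz
    have hx₁_nonneg : 0 ≤ ε * ‖x₁‖ ^ 2 := by positivity
    linarith
  have hzΩ : z ∈ Ω := by
    by_contra hzΩ
    exact (hbdry z ⟨hz, by rwa [hΩ.interior_eq]⟩).not_gt hvz
  have hΩz : Ω ∈ 𝓝 z := hΩ.mem_nhds hzΩ
  have hvz₂ : ContDiffAt ℝ 2 v z := hv.contDiffAt hΩz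
  have hqz₂ : ContDiffAt ℝ 2 (ε • q) z := hq.contDiffAt.const_smul ε
  have hmax : Δ (v + ε • q) z ≤ 0 :=
    laplacian_nonpos_of_isLocalMax (hvz₂.add hqz₂)
      (hzmax.isLocalMax (mem_of_superset hΩz subset_closure))
  have hΔq : Δ (ε • q) z = ε * (2 * Module.finrank ℝ E) := by
    rw [laplacian_smul ε hq.contDiffAt, laplacian_norm_sq, smul_eq_mul]
  have hdim : (0 : ℝ) < Module.finrank ℝ E := mod_cast Module.finrank_pos
  have hpert : 0 < ε * (2 * Module.finrank ℝ E) := by positivity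
  rw [hvz₂.laplacian_add hqz₂, hΔq] at hmax
  linarith [hΔ z hzΩ hvz]

lemma le_of_neg_laplacian_add_le (hΩ : IsOpen Ω) (hbdd : IsBounded Ω) {a : E × ℝ → ℝ}
    (hmono : ∀ x ∈ Ω, Monotone fun μ => a (x, μ)) {u w : E → ℝ}
    (huc : ContinuousOn u (closure Ω)) (hu : ContDiffOn ℝ 2 u Ω)
    (hwc : ContinuousOn w (closure Ω)) (hw : ContDiffOn ℝ 2 w Ω)
    (hle : ∀ x ∈ Ω, -Δ u x + a (x, u x) ≤ -Δ w x + a (x, w x))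
    (hbdry : ∀ x ∈ frontier Ω, u x ≤ w x) :
    ∀ x ∈ closure Ω, u x ≤ w x := by
  suffices h : ∀ x ∈ closure Ω, (u - w) x ≤ 0 from fun x hx => sub_nonpos.mp (h x hx)
  refine nonpos_of_laplacian_nonneg_of_pos hΩ hbdd (huc.sub hwc) (hu.sub hw) ?_
    fun x hx => sub_nonpos.mpr (hbdry x hx)
  intro x hx hwu
  have hΩx : Ω ∈ 𝓝 x := hΩ.mem_nhds hx
  have ha : a (x, w x) ≤ a (x, u x) := hmono x hx (sub_pos.mp hwu).le
  rw [(hu.contDiffAt hΩx).laplacian_sub (hw.contDiffAt hΩx)]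
  linarith [hle x hx]

lemma lap_eq_laplacian {n : ℕ} {u : EuclideanSpace ℝ (Fin n) → ℝ} {x : EuclideanSpace ℝ (Fin n)}
    (hu : ContDiffAt ℝ 2 u x) : lap u x = Δ u x := by
  simp only [lap, fderiv_fderiv_apply_const hu, EuclideanSpace.basisFun_apply,
    laplacian_eq_iteratedFDeriv_orthonormalBasis u (EuclideanSpace.basisFun (Fin n) ℝ)]

end Laplacian

lemma monotone_section_of_deriv_nonneg {E : Type*} [NormedAddCommGroup E] [NormedSpace ℝ E]
    {s : Set E} {a : E × ℝ → ℝ} (ha : DifferentiableOn ℝ a (s ×ˢ univ)) {x : E} (hx : x ∈ s)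
    (hderiv : ∀ μ, 0 ≤ deriv (fun t => a (x, t)) μ) : Monotone fun μ => a (x, μ) := by
  have hsection : Differentiable ℝ fun t : ℝ => (x, t) := by fun_prop
  refine monotone_of_deriv_nonneg ?_ hderiv
  exact differentiableOn_univ.mp
    (ha.comp hsection.differentiableOn fun t _ => ⟨hx, mem_univ t⟩)

theorem stmt_13_general {n : ℕ} [NeZero n] {Ω : Set (EuclideanSpace ℝ (Fin n))}
    (hΩ : IsOpen Ω) (hbdd : Bornology.IsBounded Ω) {a : EuclideanSpace ℝ (Fin n) × ℝ → ℝ}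
    (hmono : ∀ x ∈ Ω, Monotone fun μ => a (x, μ)) :
    (∀ u w : EuclideanSpace ℝ (Fin n) → ℝ,
      ContinuousOn u (closure Ω) → ContDiffOn ℝ 2 u Ω →
      ContinuousOn w (closure Ω) → ContDiffOn ℝ 2 w Ω →
      (∀ x ∈ Ω, -lap u x + a (x, u x) = 0) →
      (∀ x ∈ Ω, -lap w x + a (x, w x) = 0) →
      (∀ x ∈ frontier Ω, u x ≤ w x) →
      ∀ x ∈ closure Ω, u x ≤ w x) ∧
    (∀ (lam : ℝ) (u um up : EuclideanSpace ℝ (Fin n) → ℝ),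
      ContinuousOn u (closure Ω) → ContDiffOn ℝ 2 u Ω →
      ContinuousOn um (closure Ω) → ContDiffOn ℝ 2 um Ω →
      ContinuousOn up (closure Ω) → ContDiffOn ℝ 2 up Ω →
      (∀ x ∈ Ω, -lap u x + a (x, u x) = 0) →
      (∀ x ∈ Ω, -lap um x + a (x, um x) = 0) →
      (∀ x ∈ Ω, -lap up x + a (x, up x) = 0) →
      (∀ x ∈ frontier Ω, |u x| ≤ lam) →
      (∀ x ∈ frontier Ω, um x = -lam) →
      (∀ x ∈ frontier Ω, up x = lam) →
      ∀ x ∈ closure Ω, um x ≤ u x ∧ u x ≤ up x) := by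
  refine (and_iff_left_of_imp ?_).mpr ?_
  · intro hcomp lam u um up huc hu hmc hm hpc hp hue hme hpe hbdry hmbdry hpbdry x hx
    refine ⟨hcomp um u hmc hm huc hu hme hue (fun y hy => ?_) x hx,
      hcomp u up huc hu hpc hp hue hpe (fun y hy => ?_) x hx⟩
    · exact (hmbdry y hy).trans_le (abs_le.mp (hbdry y hy)).1
    · exact (abs_le.mp (hbdry y hy)).2.trans_eq (hpbdry y hy).symm
  · intro u w huc hu hwc hw hue hwe
    refine le_of_neg_laplacian_add_le hΩ hbdd hmono huc hu hwc hw fun x hx => ?_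
    have hΩx := hΩ.mem_nhds hx
    rw [← lap_eq_laplacian (hu.contDiffAt hΩx), ← lap_eq_laplacian (hw.contDiffAt hΩx),
      hue x hx, hwe x hx]

theorem stmt_13 (n : ℕ) (hn : 2 ≤ n) (x₀ : EuclideanSpace ℝ (Fin n)) (R : ℝ) (hR : 0 < R)
    (a : EuclideanSpace ℝ (Fin n) × ℝ → ℝ)
    (ha : ContDiffOn ℝ 2 a (closedBall x₀ R ×ˢ (univ : Set ℝ)))
    (hamono : ∀ x ∈ closedBall x₀ R, ∀ μ : ℝ, 0 ≤ deriv (fun t => a (x, t)) μ) :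
    (∀ u w : EuclideanSpace ℝ (Fin n) → ℝ,
      ContinuousOn u (closedBall x₀ R) → ContDiffOn ℝ 2 u (ball x₀ R) →
      ContinuousOn w (closedBall x₀ R) → ContDiffOn ℝ 2 w (ball x₀ R) →
      (∀ x ∈ ball x₀ R, -lap u x + a (x, u x) = 0) →
      (∀ x ∈ ball x₀ R, -lap w x + a (x, w x) = 0) →
      (∀ x ∈ sphere x₀ R, u x ≤ w x) →
      ∀ x ∈ closedBall x₀ R, u x ≤ w x) ∧
    (∀ (lam : ℝ) (u um up : EuclideanSpace ℝ (Fin n) → ℝ),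
      ContinuousOn u (closedBall x₀ R) → ContDiffOn ℝ 2 u (ball x₀ R) →
      ContinuousOn um (closedBall x₀ R) → ContDiffOn ℝ 2 um (ball x₀ R) →
      ContinuousOn up (closedBall x₀ R) → ContDiffOn ℝ 2 up (ball x₀ R) →
      (∀ x ∈ ball x₀ R, -lap u x + a (x, u x) = 0) →
      (∀ x ∈ ball x₀ R, -lap um x + a (x, um x) = 0) →
      (∀ x ∈ ball x₀ R, -lap up x + a (x, up x) = 0) →
      (∀ x ∈ sphere x₀ R, |u x| ≤ lam) →
      (∀ x ∈ sphere x₀ R, um x = -lam) →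
      (∀ x ∈ sphere x₀ R, up x = lam) →
      ∀ x ∈ closedBall x₀ R, um x ≤ u x ∧ u x ≤ up x) := by
  have : NeZero n := ⟨by omega⟩
  simpa only [closure_ball x₀ hR.ne', frontier_ball x₀ hR.ne'] using
    stmt_13_general isOpen_ball isBounded_ball fun x hx =>
      have hx := ball_subset_closedBall hx
      monotone_section_of_deriv_nonneg (ha.differentiableOn two_ne_zero) hx (hamono x hx)
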